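/- Let γ = [[A,B],[C,D]] ∈ Sp(g,ℝ), Ω ∈ ℍ_g, and W ∈ ℂ^{h×g}, and set Ω̃ = γ·Ω and W̃ = W(CΩ+D)^{-1}. Then (Im Ω̃)^{-1} ᵗW̃ W̄̃ = (CΩ̄+D) (Im Ω)^{-1} ᵗW W̄ (CΩ̄+D)^{-1}, and consequently σ((Im Ω̃)^{-1} ᵗW̃ W̄̃) = σ((Im Ω)^{-1} ᵗW W̄); i.e., the Hermitian form σ((Im Ω)^{-1} ᵗ(dZ) dZ̄) on ℂ^{h×g} is invariant under the Jacobi group action (Ω,Z) ↦ (γ·Ω, (Z+λΩ+μ)(CΩ+D)^{-1}). -/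

import Mathlib

open Matrix Complex MeasureTheory

noncomputable section

/-- The Siegel upper half space of degree `g`. -/
def SiegelUpperHalfSpace (g : ℕ) : Set (Matrix (Fin g) (Fin g) ℂ) :=
  {Ω | Ωᵀ = Ω ∧ (Ω.map Complex.im).PosDef}

/-- The standard symplectic matrix `J_g`. -/
def Jg (g : ℕ) : Matrix (Fin g ⊕ Fin g) (Fin g ⊕ Fin g) ℝ :=
  Matrix.fromBlocks 0 1 (-1) 0

/-- `M ∈ Sp(g,ℝ)`. -/
def IsSymplectic {g : ℕ} (M : Matrix (Fin g ⊕ Fin g) (Fin g ⊕ Fin g) ℝ) : Prop :=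
  Mᵀ * Jg g * M = Jg g

/-- Complexification of a real matrix. -/
def matC {m n : Type*} (M : Matrix m n ℝ) : Matrix m n ℂ := M.map Complex.ofReal

/-- Cast an integer matrix to a real matrix. -/
def matZR {m n : Type*} (M : Matrix m n ℤ) : Matrix m n ℝ := M.map Int.cast

/-- Cast an integer matrix to a complex matrix. -/
def matZC {m n : Type*} (M : Matrix m n ℤ) : Matrix m n ℂ := M.map Int.cast

def blockA {g : ℕ} (M : Matrix (Fin g ⊕ Fin g) (Fin g ⊕ Fin g) ℝ) : Matrix (Fin g) (Fin g) ℂ :=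
  matC M.toBlocks₁₁
def blockB {g : ℕ} (M : Matrix (Fin g ⊕ Fin g) (Fin g ⊕ Fin g) ℝ) : Matrix (Fin g) (Fin g) ℂ :=
  matC M.toBlocks₁₂
def blockC {g : ℕ} (M : Matrix (Fin g ⊕ Fin g) (Fin g ⊕ Fin g) ℝ) : Matrix (Fin g) (Fin g) ℂ :=
  matC M.toBlocks₂₁
def blockD {g : ℕ} (M : Matrix (Fin g ⊕ Fin g) (Fin g ⊕ Fin g) ℝ) : Matrix (Fin g) (Fin g) ℂ :=
  matC M.toBlocks₂₂

/-- The action of `Sp(g,ℝ)` on the Siegel upper half space: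
`M·Ω = (AΩ+B)(CΩ+D)⁻¹`. -/
def spAction {g : ℕ} (M : Matrix (Fin g ⊕ Fin g) (Fin g ⊕ Fin g) ℝ)
    (Ω : Matrix (Fin g) (Fin g) ℂ) : Matrix (Fin g) (Fin g) ℂ :=
  (blockA M * Ω + blockB M) * (blockC M * Ω + blockD M)⁻¹

/-- The Heisenberg group condition: `κ + μᵗλ` symmetric. -/
def IsHeisenberg {g h : ℕ} (lam mu : Matrix (Fin h) (Fin g) ℝ) (kap : Matrix (Fin h) (Fin h) ℝ) :
    Prop :=
  (kap + mu * lamᵀ).IsSymm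

/-- The action of the Jacobi group `G^J = Sp(g,ℝ) ⋉ H_ℝ^{(g,h)}` on `ℍ_g × ℂ^{(h,g)}`:
`(M,(λ,μ;κ))·(Ω,Z) = (M·Ω, (Z+λΩ+μ)(CΩ+D)⁻¹)`. -/
def jacobiAction {g h : ℕ} (M : Matrix (Fin g ⊕ Fin g) (Fin g ⊕ Fin g) ℝ)
    (lam mu : Matrix (Fin h) (Fin g) ℝ)
    (P : Matrix (Fin g) (Fin g) ℂ × Matrix (Fin h) (Fin g) ℂ) :
    Matrix (Fin g) (Fin g) ℂ × Matrix (Fin h) (Fin g) ℂ :=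
  (spAction M P.1, (P.2 + matC lam * P.1 + matC mu) * (blockC M * P.1 + blockD M)⁻¹)

theorem matC_mul' {l m n : Type*} [Fintype m] (M : Matrix l m ℝ) (N : Matrix m n ℝ) :
    matC (M * N) = matC M * matC N := by
  unfold matC
  exact Matrix.map_mul (f := Complex.ofRealHom)

theorem matC_conj' {m n : Type*} (M : Matrix m n ℝ) :
    (matC M).map (starRingEnd ℂ) = matC M := by
  ext i j; simp [matC]

theorem symp_rel {g : ℕ} (γ : Matrix (Fin g ⊕ Fin g) (Fin g ⊕ Fin g) ℝ) (hγ : IsSymplectic γ)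
    (X Y : Matrix (Fin g) (Fin g) ℂ) (hX : Xᵀ = X) :
    (blockA γ * X + blockB γ)ᵀ * (blockC γ * Y + blockD γ)
      - (blockC γ * X + blockD γ)ᵀ * (blockA γ * Y + blockB γ) = X - Y := by
  have h := hγ
  unfold IsSymplectic Jg at h
  rw [← Matrix.fromBlocks_toBlocks γ, Matrix.fromBlocks_transpose, Matrix.fromBlocks_multiply,
    Matrix.fromBlocks_multiply, Matrix.fromBlocks_inj] at h
  have tr : ∀ M : Matrix (Fin g) (Fin g) ℝ, (matC M)ᵀ = matC Mᵀ := fun M => rfl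
  have ha : ∀ M N : Matrix (Fin g) (Fin g) ℝ, matC (M + N) = matC M + matC N := by
    intro M N; ext i j; simp [matC]
  have hn : ∀ M : Matrix (Fin g) (Fin g) ℝ, matC (-M) = -matC M := by
    intro M; ext i j; simp [matC]
  have h0 : matC (0 : Matrix (Fin g) (Fin g) ℝ) = 0 := by
    ext i j; simp [matC]
  have h1' : matC (1 : Matrix (Fin g) (Fin g) ℝ) = 1 := by
    ext i j; simp [matC, Matrix.one_apply]; split_ifs <;> simp
  obtain ⟨h1, h2, h3, h4⟩ := h
  apply_fun matC at h1 h2 h3 h4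
  simp only [mul_zero, mul_one, zero_add, add_zero, mul_neg, neg_mul, ha, hn, h0, h1',
    matC_mul', ← tr] at h1 h2 h3 h4
  change -((blockC γ)ᵀ * blockA γ) + (blockA γ)ᵀ * blockC γ = 0 at h1
  change -((blockC γ)ᵀ * blockB γ) + (blockA γ)ᵀ * blockD γ = 1 at h2
  change -((blockD γ)ᵀ * blockA γ) + (blockB γ)ᵀ * blockC γ = -1 at h3
  change -((blockD γ)ᵀ * blockB γ) + (blockB γ)ᵀ * blockD γ = 0 at h4
  simp only [Matrix.transpose_add, Matrix.transpose_mul, hX]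
  calc _ = X * (-((blockC γ)ᵀ * blockA γ) + (blockA γ)ᵀ * blockC γ) * Y
        + X * (-((blockC γ)ᵀ * blockB γ) + (blockA γ)ᵀ * blockD γ)
        + (-((blockD γ)ᵀ * blockA γ) + (blockB γ)ᵀ * blockC γ) * Y
        + (-((blockD γ)ᵀ * blockB γ) + (blockB γ)ᵀ * blockD γ) := by noncomm_ring
    _ = X - Y := by rw [h1, h2, h3, h4]; noncomm_ring

theorem sub_conj' {g : ℕ} (X : Matrix (Fin g) (Fin g) ℂ) :
    X - X.map (starRingEnd ℂ) = (2 * Complex.I) • matC (X.map Complex.im) := by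
  ext i j
  simp only [matC, Matrix.sub_apply, Matrix.map_apply, Matrix.smul_apply, smul_eq_mul]
  rw [Complex.sub_conj]; push_cast; ring

theorem matC_quad {g : ℕ} (Y : Matrix (Fin g) (Fin g) ℝ) (hY : Y.PosDef) (v : Fin g → ℂ)
    (h : v ⬝ᵥ (matC Y *ᵥ star v) = 0) : v = 0 := by
  have e : (v ⬝ᵥ (matC Y *ᵥ star v)).re =
      (fun i => (v i).re) ⬝ᵥ (Y *ᵥ fun i => (v i).re)
      + (fun i => (v i).im) ⬝ᵥ (Y *ᵥ fun i => (v i).im) := by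
    simp only [dotProduct, Matrix.mulVec, matC, Matrix.map_apply, Complex.re_sum, Complex.im_sum,
      Complex.mul_re, Complex.mul_im, ← Finset.sum_add_distrib, Pi.star_apply]
    refine Finset.sum_congr rfl fun i _ => ?_
    simp [Finset.mul_sum]
  rw [h, Complex.zero_re] at e
  have p : ∀ x : Fin g → ℝ, x ≠ 0 → 0 < x ⬝ᵥ (Y *ᵥ x) := by
    intro x hx; simpa using hY.dotProduct_mulVec_pos hx
  have q : ∀ x : Fin g → ℝ, 0 ≤ x ⬝ᵥ (Y *ᵥ x) := by
    intro x
    by_cases hx : x = 0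
    · simp [hx]
    · exact (p x hx).le
  have hr : (fun i => (v i).re) = 0 := by
    by_contra hx; have := p _ hx; have := q (fun i => (v i).im); linarith
  have hi : (fun i => (v i).im) = 0 := by
    by_contra hx; have := p _ hx; have := q (fun i => (v i).re); linarith
  ext i
  exact Complex.ext (congrFun hr i) (congrFun hi i)

/-- for `γ = [[A,B],[C,D]] ∈ Sp(g,ℝ)`, `Ω ∈ ℍ_g`, `W ∈ ℂ^{(h,g)}`, with
`Ω̃ = γ·Ω` and `W̃ = W(CΩ+D)⁻¹`, one has
`(Im Ω̃)⁻¹ ᵗW̃ W̄̃ = (CΩ̄+D) (Im Ω)⁻¹ ᵗW W̄ (CΩ̄+D)⁻¹` and hence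
`σ((Im Ω̃)⁻¹ ᵗW̃ W̄̃) = σ((Im Ω)⁻¹ ᵗW W̄)`; i.e. the Hermitian form
`σ((Im Ω)⁻¹ ᵗ(dZ) dZ̄)` is invariant under the Jacobi group action. -/
theorem hermitian_form_invariant (g h : ℕ) (hg : 0 < g) (hh : 0 < h)
    (γ : Matrix (Fin g ⊕ Fin g) (Fin g ⊕ Fin g) ℝ) (hγ : IsSymplectic γ)
    (Ω : Matrix (Fin g) (Fin g) ℂ) (hΩ : Ω ∈ SiegelUpperHalfSpace g)
    (W : Matrix (Fin h) (Fin g) ℂ)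
    (Ωt : Matrix (Fin g) (Fin g) ℂ) (hΩt : Ωt = spAction γ Ω)
    (Wt : Matrix (Fin h) (Fin g) ℂ) (hWt : Wt = W * (blockC γ * Ω + blockD γ)⁻¹) :
    (matC (Ωt.map Complex.im))⁻¹ * Wtᵀ * Wt.map (starRingEnd ℂ) =
      (blockC γ * Ω.map (starRingEnd ℂ) + blockD γ) *
        ((matC (Ω.map Complex.im))⁻¹ * Wᵀ * W.map (starRingEnd ℂ)) *
        (blockC γ * Ω.map (starRingEnd ℂ) + blockD γ)⁻¹ ∧
    ((matC (Ωt.map Complex.im))⁻¹ * Wtᵀ * Wt.map (starRingEnd ℂ)).trace =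
      ((matC (Ω.map Complex.im))⁻¹ * Wᵀ * W.map (starRingEnd ℂ)).trace := by
  obtain ⟨hs, hpos⟩ := hΩ
  have cmul : ∀ {k : ℕ} (M : Matrix (Fin k) (Fin g) ℂ) (N : Matrix (Fin g) (Fin g) ℂ),
      (M * N).map (starRingEnd ℂ) = M.map (starRingEnd ℂ) * N.map (starRingEnd ℂ) :=
    fun M N => Matrix.map_mul
  have cadd : ∀ (M N : Matrix (Fin g) (Fin g) ℂ),
      (M + N).map (starRingEnd ℂ) = M.map (starRingEnd ℂ) + N.map (starRingEnd ℂ) :=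
    fun M N => by ext i j; simp
  have hPb : (blockC γ * Ω + blockD γ).map (starRingEnd ℂ)
      = blockC γ * Ω.map (starRingEnd ℂ) + blockD γ := by
    rw [cadd, cmul]; simp only [blockC, blockD, matC_conj']
  have hNb : (blockA γ * Ω + blockB γ).map (starRingEnd ℂ)
      = blockA γ * Ω.map (starRingEnd ℂ) + blockB γ := by
    rw [cadd, cmul]; simp only [blockA, blockB, matC_conj']
  have k1 := symp_rel γ hγ Ω (Ω.map (starRingEnd ℂ)) hs
  have k2 := symp_rel γ hγ Ω Ω hs
  rw [sub_conj'] at k1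
  rw [sub_self] at k2
  rw [← hPb, ← hNb] at k1
  rw [← hPb]
  unfold spAction at hΩt
  generalize blockC γ * Ω + blockD γ = P at *
  generalize blockA γ * Ω + blockB γ = N at *
  have hI : (2 * Complex.I) ≠ 0 := by simp
  have hPdet : P.det ≠ 0 := by
    intro h0
    obtain ⟨v, hv, hv0⟩ := Matrix.exists_mulVec_eq_zero_iff.mpr h0
    have hvb : P.map (starRingEnd ℂ) *ᵥ star v = 0 := by
      ext i
      have := congrArg (starRingEnd ℂ) (congrFun hv0 i)
      simpa [Matrix.mulVec, dotProduct] using this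
    apply hv
    apply matC_quad _ hpos
    have e := congrArg (fun M => v ⬝ᵥ (M *ᵥ star v)) k1
    simp only [Matrix.sub_mulVec, ← Matrix.mulVec_mulVec, hvb, Matrix.mulVec_zero, zero_sub,
      Matrix.smul_mulVec, dotProduct_smul, dotProduct_neg] at e
    rw [Matrix.dotProduct_mulVec, Matrix.vecMul_transpose, hv0] at e
    simpa using e.symm
  have hPu : IsUnit P.det := isUnit_iff_ne_zero.mpr hPdet
  have hcinv : P⁻¹.map (starRingEnd ℂ) = (P.map (starRingEnd ℂ))⁻¹ := by
    symm
    apply Matrix.inv_eq_left_inv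
    rw [← cmul, Matrix.nonsing_inv_mul _ hPu]
    ext i j; simp [Matrix.one_apply]
  have hPbu : IsUnit (P.map (starRingEnd ℂ)).det := by
    apply Matrix.isUnit_det_of_left_inverse (B := P⁻¹.map (starRingEnd ℂ))
    rw [← cmul, Matrix.nonsing_inv_mul _ hPu]
    ext i j; simp [Matrix.one_apply]
  have hPtu : IsUnit (Pᵀ).det := by rwa [Matrix.det_transpose]
  set Q := P.map (starRingEnd ℂ) with hQ
  have key : Pᵀ * matC (Ωt.map Complex.im) * Q = matC (Ω.map Complex.im) := by
    have e1 : Pᵀ * (Ωt - Ωt.map (starRingEnd ℂ)) * Q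
        = (2 * Complex.I) • matC (Ω.map Complex.im) := by
      rw [← k1, hΩt, cmul, hcinv, mul_sub, sub_mul, ← mul_assoc, ← mul_assoc,
        ← sub_eq_zero.mp k2, mul_assoc Nᵀ, Matrix.mul_nonsing_inv _ hPu, mul_one,
        mul_assoc _ Q⁻¹ Q, Matrix.nonsing_inv_mul _ hPbu, mul_one]
    rw [sub_conj', Matrix.mul_smul, Matrix.smul_mul] at e1
    exact smul_right_injective _ hI e1
  have hinv : (matC (Ωt.map Complex.im))⁻¹ = Q * (matC (Ω.map Complex.im))⁻¹ * Pᵀ := by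
    rw [← key, Matrix.mul_inv_rev, Matrix.mul_inv_rev, ← mul_assoc, ← mul_assoc,
      Matrix.mul_nonsing_inv _ hPbu, one_mul, mul_assoc, Matrix.nonsing_inv_mul _ hPtu, mul_one]
  have main : (matC (Ωt.map Complex.im))⁻¹ * Wtᵀ * Wt.map (starRingEnd ℂ) =
      Q * ((matC (Ω.map Complex.im))⁻¹ * Wᵀ * W.map (starRingEnd ℂ)) * Q⁻¹ := by
    rw [hinv, hWt, cmul, hcinv, Matrix.transpose_mul, Matrix.transpose_nonsing_inv]
    simp only [Matrix.mul_assoc]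
    rw [Matrix.mul_nonsing_inv_cancel_left _ _ hPtu]
  refine ⟨main, ?_⟩
  rw [main, Matrix.trace_mul_comm, ← Matrix.mul_assoc, Matrix.nonsing_inv_mul _ hPbu,
    Matrix.one_mul]

end
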